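/- arXiv:1801.06488 — 3 statements merged into one kernel-verified Lean document; each statement's English description precedes it below -/
import Mathlib

section
/- Let C be a category and suppose the diagonal functor Δ : C → C × C has an ambiadjoint ⊕ : C × C → C. Write (i_A, i_B) : (A, B) → (A ⊕ B, A ⊕ B) for the unit of ⊕ ⊣ Δ and (p_A, p_B) : (A ⊕ B, A ⊕ B) → (A, B) for the counit of Δ ⊣ ⊕. Then for all objects A, B the composite p_B ∘ i_A : A → B is both constant and coconstant; consequently C has zero morphisms. -/
open CategoryTheory

universe v u

/-- A morphism `a : A ⟶ B` is constant if precomposition with anything gives the same result. -/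
def IsConstantMor {C : Type u} [Category.{v} C] {A B : C} (a : A ⟶ B) : Prop :=
  ∀ ⦃X : C⦄ (f g : X ⟶ A), f ≫ a = g ≫ a

/-- A morphism `a : A ⟶ B` is coconstant if postcomposition with anything gives the same result. -/
def IsCoconstantMor {C : Type u} [Category.{v} C] {A B : C} (a : A ⟶ B) : Prop :=
  ∀ ⦃Y : C⦄ (u v : B ⟶ Y), a ≫ u = a ≫ v

/-- `(P, pA, pB, iA, iB)` is a biproduct of `A` and `B` in the enrichment-free sense:
`(P, pA, pB)` is a product, `(P, iA, iB)` is a coproduct, `pA ∘ iA = id`, `pB ∘ iB = id`,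
and the two canonical idempotents `iA ∘ pA` and `iB ∘ pB` on `P` commute. -/
structure IsEFBiproduct {C : Type u} [Category.{v} C] {A B : C} (P : C)
    (pA : P ⟶ A) (pB : P ⟶ B) (iA : A ⟶ P) (iB : B ⟶ P) : Prop where
  isProduct : ∀ (X : C) (f : X ⟶ A) (g : X ⟶ B), ∃! h : X ⟶ P, h ≫ pA = f ∧ h ≫ pB = g
  isCoproduct : ∀ (X : C) (f : A ⟶ X) (g : B ⟶ X), ∃! h : P ⟶ X, iA ≫ h = f ∧ iB ≫ h = g
  pA_iA : iA ≫ pA = 𝟙 A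
  pB_iB : iB ≫ pB = 𝟙 B
  idem_comm : (pB ≫ iB) ≫ (pA ≫ iA) = (pA ≫ iA) ≫ (pB ≫ iB)

/-- The category `C` has zero morphisms: a family `z A B : A ⟶ B` absorbing under
pre- and postcomposition, i.e. `g ∘ z X Y ∘ f = z W Z`. -/
def HasZeroFamily (C : Type u) [Category.{v} C] : Prop :=
  ∃ z : ∀ A B : C, A ⟶ B, ∀ (W X Y Z : C) (f : W ⟶ X) (g : Y ⟶ Z), f ≫ z X Y ≫ g = z W Z

/-!
The unit of `⊕ ⊣ Δ` followed by the counit of `Δ ⊣ ⊕` gives an arrow `A ⟶ A ⊕ B ⟶ B` natural in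
`(A, B)`, that is, a natural transformation `τ` between the two projections `C × C ⥤ C`. Its
naturality square at `(f, g)` reads `f ≫ τ = τ ≫ g`: taking `g = 𝟙` shows that `f ≫ τ` does not
depend on `f`, and taking `f = 𝟙` that `τ ≫ g` does not depend on `g`. Moreover, a constant and a
coconstant arrow `A ⟶ B` coincide as soon as there is any arrow `B ⟶ A`, and constant arrows are
stable under composition on either side; so arrows that are both constant and coconstant, one in
every hom-set, form a family of zero morphisms.
-/

section ConstantMorphisms

variable {C : Type u} [Category.{v} C] {A B : C}

theorem IsConstantMor.precomp {a : A ⟶ B} (ha : IsConstantMor a) {X : C} (f : X ⟶ A) :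
    IsConstantMor (f ≫ a) := by
  intro W g h
  simpa only [Category.assoc] using ha (g ≫ f) (h ≫ f)

theorem IsConstantMor.postcomp {a : A ⟶ B} (ha : IsConstantMor a) {Y : C} (g : B ⟶ Y) :
    IsConstantMor (a ≫ g) := by
  intro W f h
  simp only [← Category.assoc, ha f h]

theorem IsConstantMor.eq_of_isCoconstantMor {a b : A ⟶ B} (ha : IsConstantMor a)
    (hb : IsCoconstantMor b) (c : B ⟶ A) : a = b :=
  calc
    a = 𝟙 A ≫ a := (Category.id_comp a).symm
    _ = (b ≫ c) ≫ a := ha (𝟙 A) (b ≫ c)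
    _ = b ≫ c ≫ a := Category.assoc b c a
    _ = b ≫ 𝟙 B := hb (c ≫ a) (𝟙 B)
    _ = b := Category.comp_id b

theorem hasZeroFamily_of_isConstantMor_of_isCoconstantMor (z : ∀ A B : C, A ⟶ B)
    (hconst : ∀ A B, IsConstantMor (z A B)) (hcoconst : ∀ A B, IsCoconstantMor (z A B)) :
    HasZeroFamily C :=
  ⟨z, fun W X Y Z f g ↦
    (((hconst X Y).postcomp g).precomp f).eq_of_isCoconstantMor (hcoconst W Z) (z Z W)⟩

end ConstantMorphisms

section FstToSnd

variable {C : Type u} [Category.{v} C]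
  (τ : CategoryTheory.Prod.fst C C ⟶ CategoryTheory.Prod.snd C C)

theorem comp_fstToSnd_app {A A' B B' : C} (f : A ⟶ A') (g : B ⟶ B') :
    f ≫ τ.app (A', B') = τ.app (A, B) ≫ g :=
  τ.naturality (Prod.mkHom f g)

theorem isConstantMor_fstToSnd_app (A B : C) : IsConstantMor (τ.app (A, B)) :=
  fun _ f g ↦ (comp_fstToSnd_app τ f (𝟙 B)).trans (comp_fstToSnd_app τ g (𝟙 B)).symm

theorem isCoconstantMor_fstToSnd_app (A B : C) : IsCoconstantMor (τ.app (A, B)) :=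
  fun _ u v ↦ (comp_fstToSnd_app τ (𝟙 A) u).symm.trans (comp_fstToSnd_app τ (𝟙 A) v)

end FstToSnd

theorem stmt8_general {C : Type u} [Category.{v} C]
    (τ : CategoryTheory.Prod.fst C C ⟶ CategoryTheory.Prod.snd C C) :
    (∀ A B : C, IsConstantMor (τ.app (A, B)) ∧ IsCoconstantMor (τ.app (A, B))) ∧
    HasZeroFamily C :=
  ⟨fun A B ↦ ⟨isConstantMor_fstToSnd_app τ A B, isCoconstantMor_fstToSnd_app τ A B⟩,
    hasZeroFamily_of_isConstantMor_of_isCoconstantMor (fun A B ↦ τ.app (A, B))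
      (isConstantMor_fstToSnd_app τ) (isCoconstantMor_fstToSnd_app τ)⟩

/-- If the diagonal `Δ : C ⥤ C × C` has an ambiadjoint `F = ⊕` (with unit
`(iA, iB)` of `⊕ ⊣ Δ` and counit `(pA, pB)` of `Δ ⊣ ⊕`), then each `pB ∘ iA : a ⟶ b` is
both constant and coconstant; consequently `C` has zero morphisms. -/
theorem stmt8 {C : Type u} [Category.{v} C] (F : C × C ⥤ C)
    (adj1 : F ⊣ Functor.diag C) (adj2 : Functor.diag C ⊣ F) :
    (∀ A B : C,
      IsConstantMor ((adj1.unit.app (A, B)).1 ≫ (adj2.counit.app (A, B)).2) ∧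
      IsCoconstantMor ((adj1.unit.app (A, B)).1 ≫ (adj2.counit.app (A, B)).2)) ∧
    HasZeroFamily C :=
  stmt8_general (Functor.whiskerRight adj1.unit (CategoryTheory.Prod.fst C C) ≫
    Functor.whiskerRight adj2.counit (CategoryTheory.Prod.snd C C))
end

section
/- Let C be a category, and let (A ⊕ B, p_A, p_B, i_A, i_B) and (C' ⊕ D', q_{C'}, q_{D'}, j_{C'}, j_{D'}) be biproducts in the enrichment-free sense of A, B and of C', D' respectively. For morphisms f : A → C' and g : B → D', the unique morphism h : A ⊕ B → C' ⊕ D' induced by the coproduct property of A ⊕ B from the cocone (j_{C'} ∘ f, j_{D'} ∘ g) equals the unique morphism induced by the product property of C' ⊕ D' from the cone (f ∘ p_A, g ∘ p_B). That is, the 'sum' map f ⊕ g defined via the coproduct structure coincides with the map f × g defined via the product structure. -/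
open CategoryTheory

universe v u

/-!
A morphism `A ⊕ B ⟶ C' ⊕ D'` is determined by its `2 × 2` matrix of components. The diagonal entries
of `f ⊕ g` and `f × g` are `f` and `g`. The off-diagonal composites `iB ≫ pA` and `iA ≫ pB` of a
biproduct play the role of zero morphisms: rewriting `iB ≫ pA ≫ u` with the commuting idempotents
makes it depend only on an arbitrary morphism out of `B`, so `iB ≫ pA` is coconstant, and dually it
is constant. An off-diagonal entry of `f ⊕ g` ends in a constant morphism and the corresponding
entry of `f × g` starts with a coconstant one, which forces the two to agree.
-/

theorem IsCoconstantMor.comp_eq_comp_of_isConstantMor {C : Type u} [Category.{v} C]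
    {A B D E : C} {a : B ⟶ A} {c : D ⟶ E} (ha : IsCoconstantMor a) (hc : IsConstantMor c)
    (s : A ⟶ D) (f : A ⟶ E) (g : B ⟶ D) :
    g ≫ c = a ≫ f :=
  calc
    g ≫ c = (a ≫ s) ≫ c := hc g (a ≫ s)
    _ = a ≫ s ≫ c := Category.assoc a s c
    _ = a ≫ f := ha (s ≫ c) f

namespace IsEFBiproduct

variable {C : Type u} [Category.{v} C] {A B P : C}
  {pA : P ⟶ A} {pB : P ⟶ B} {iA : A ⟶ P} {iB : B ⟶ P}

theorem symm (h : IsEFBiproduct P pA pB iA iB) : IsEFBiproduct P pB pA iB iA where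
  isProduct X f g := by simpa only [and_comm] using h.isProduct X g f
  isCoproduct X f g := by simpa only [and_comm] using h.isCoproduct X g f
  pA_iA := h.pB_iB
  pB_iB := h.pA_iA
  idem_comm := h.idem_comm.symm

theorem hom_ext_to (h : IsEFBiproduct P pA pB iA iB) {X : C} {k l : X ⟶ P}
    (hA : k ≫ pA = l ≫ pA) (hB : k ≫ pB = l ≫ pB) : k = l :=
  (h.isProduct X (l ≫ pA) (l ≫ pB)).unique ⟨hA, hB⟩ ⟨rfl, rfl⟩

theorem hom_ext_from (h : IsEFBiproduct P pA pB iA iB) {Y : C} {k l : P ⟶ Y}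
    (hA : iA ≫ k = iA ≫ l) (hB : iB ≫ k = iB ≫ l) : k = l :=
  (h.isCoproduct Y (iA ≫ l) (iB ≫ l)).unique ⟨hA, hB⟩ ⟨rfl, rfl⟩

theorem iB_comp_pA_comp_eq (h : IsEFBiproduct P pA pB iA iB) {Y : C} (u : A ⟶ Y) (t : B ⟶ Y) :
    (iB ≫ pA) ≫ u = (iB ≫ pA ≫ iA ≫ pB) ≫ t := by
  obtain ⟨k, ⟨rfl, rfl⟩, -⟩ := h.isCoproduct Y u t
  calc
    (iB ≫ pA) ≫ iA ≫ k = iB ≫ ((pB ≫ iB) ≫ (pA ≫ iA)) ≫ k := by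
      simp only [Category.assoc, reassoc_of% h.pB_iB]
    _ = iB ≫ ((pA ≫ iA) ≫ (pB ≫ iB)) ≫ k := by rw [h.idem_comm]
    _ = (iB ≫ pA ≫ iA ≫ pB) ≫ iB ≫ k := by simp only [Category.assoc]

theorem comp_iB_comp_pA_eq (h : IsEFBiproduct P pA pB iA iB) {X : C} (s : X ⟶ B) (a : X ⟶ A) :
    s ≫ iB ≫ pA = a ≫ iA ≫ pB ≫ iB ≫ pA := by
  obtain ⟨k, ⟨rfl, rfl⟩, -⟩ := h.isProduct X a s
  calc
    (k ≫ pB) ≫ iB ≫ pA = k ≫ ((pB ≫ iB) ≫ (pA ≫ iA)) ≫ pA := by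
      simp only [Category.assoc, h.pA_iA, Category.comp_id]
    _ = k ≫ ((pA ≫ iA) ≫ (pB ≫ iB)) ≫ pA := by rw [h.idem_comm]
    _ = (k ≫ pA) ≫ iA ≫ pB ≫ iB ≫ pA := by simp only [Category.assoc]

theorem isCoconstantMor_iB_comp_pA (h : IsEFBiproduct P pA pB iA iB) : IsCoconstantMor (iB ≫ pA) :=
  fun _ u v =>
    (h.iB_comp_pA_comp_eq u (iB ≫ pA ≫ u)).trans (h.iB_comp_pA_comp_eq v (iB ≫ pA ≫ u)).symm

theorem isConstantMor_iB_comp_pA (h : IsEFBiproduct P pA pB iA iB) : IsConstantMor (iB ≫ pA) :=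
  fun _ s t =>
    (h.comp_iB_comp_pA_eq s (s ≫ iB ≫ pA)).trans (h.comp_iB_comp_pA_eq t (s ≫ iB ≫ pA)).symm

end IsEFBiproduct

-- In pointed sets, for instance, `P` may be a wedge sum and `Q` a cartesian product.
theorem stmt9_general {C : Type u} [Category.{v} C] {A B C' D' P Q : C}
    {pA : P ⟶ A} {pB : P ⟶ B} {iA : A ⟶ P} {iB : B ⟶ P}
    {qC : Q ⟶ C'} {qD : Q ⟶ D'} {jC : C' ⟶ Q} {jD : D' ⟶ Q}
    (hP : ∀ {Y : C} {k l : P ⟶ Y}, iA ≫ k = iA ≫ l → iB ≫ k = iB ≫ l → k = l)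
    (hA : iA ≫ pA = 𝟙 A) (hB : iB ≫ pB = 𝟙 B)
    (hBA : IsCoconstantMor (iB ≫ pA)) (hAB : IsCoconstantMor (iA ≫ pB))
    (hQ : ∀ {X : C} {k l : X ⟶ Q}, k ≫ qC = l ≫ qC → k ≫ qD = l ≫ qD → k = l)
    (hC : jC ≫ qC = 𝟙 C') (hD : jD ≫ qD = 𝟙 D')
    (hDC : IsConstantMor (jD ≫ qC)) (hCD : IsConstantMor (jC ≫ qD))
    (f : A ⟶ C') (g : B ⟶ D') {h h' : P ⟶ Q}
    (hh : iA ≫ h = f ≫ jC ∧ iB ≫ h = g ≫ jD)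
    (hh' : h' ≫ qC = pA ≫ f ∧ h' ≫ qD = pB ≫ g) :
    h = h' := by
  have entry_BC : g ≫ jD ≫ qC = (iB ≫ pA) ≫ f :=
    hBA.comp_eq_comp_of_isConstantMor hDC (f ≫ jC ≫ qD) f g
  have entry_AD : f ≫ jC ≫ qD = (iA ≫ pB) ≫ g :=
    hAB.comp_eq_comp_of_isConstantMor hCD (g ≫ jD ≫ qC) g f
  have comp_qC : h ≫ qC = pA ≫ f := by
    apply hP
    · rw [reassoc_of% hh.1, reassoc_of% hA, hC, Category.comp_id]
    · rw [reassoc_of% hh.2, entry_BC, Category.assoc]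
  have comp_qD : h ≫ qD = pB ≫ g := by
    apply hP
    · rw [reassoc_of% hh.1, entry_AD, Category.assoc]
    · rw [reassoc_of% hh.2, reassoc_of% hB, hD, Category.comp_id]
  exact hQ (comp_qC.trans hh'.1.symm) (comp_qD.trans hh'.2.symm)

/-- Given biproducts (in the enrichment-free sense) of `A, B` and of `C', D'`,
and morphisms `f : A ⟶ C'`, `g : B ⟶ D'`, the morphism `f ⊕ g` induced by the coproduct
structure from the cocone `(jC ∘ f, jD ∘ g)` equals the morphism `f × g` induced by the
product structure from the cone `(f ∘ pA, g ∘ pB)`. -/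
theorem stmt9 {C : Type u} [Category.{v} C] {A B C' D' : C}
    {P Q : C} {pA : P ⟶ A} {pB : P ⟶ B} {iA : A ⟶ P} {iB : B ⟶ P}
    {qC : Q ⟶ C'} {qD : Q ⟶ D'} {jC : C' ⟶ Q} {jD : D' ⟶ Q}
    (h1 : IsEFBiproduct P pA pB iA iB) (h2 : IsEFBiproduct Q qC qD jC jD)
    (f : A ⟶ C') (g : B ⟶ D') (h h' : P ⟶ Q)
    (hh : iA ≫ h = f ≫ jC ∧ iB ≫ h = g ≫ jD)
    (hh' : h' ≫ qC = pA ≫ f ∧ h' ≫ qD = pB ≫ g) :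
    h = h' :=
  stmt9_general h1.hom_ext_from h1.pA_iA h1.pB_iB
    h1.isCoconstantMor_iB_comp_pA h1.symm.isCoconstantMor_iB_comp_pA
    h2.hom_ext_to h2.pA_iA h2.pB_iB
    h2.isConstantMor_iB_comp_pA h2.symm.isConstantMor_iB_comp_pA f g hh hh'
end

section
/- Let C be a category and let (P, p_A, p_B, i_A, i_B) be a biproduct of A and B in the enrichment-free sense. Then for any object X and any morphisms f, g : X → A, one has p_B ∘ i_A ∘ f = p_B ∘ i_A ∘ g (constancy), and for any morphisms u, v : B → Y one has u ∘ p_B ∘ i_A = v ∘ p_B ∘ i_A (coconstancy); moreover the composite (i_B ∘ p_B) ∘ (i_A ∘ p_A) : A ⊕ B → A ⊕ B is idempotent. -/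
open CategoryTheory

universe v u

/-- A weak product of `A` and `B`: every pair of morphisms into `A` and `B` factors through the
projections, but the factorization need not be unique. -/
def IsWeakProduct {C : Type u} [Category.{v} C] {A B P : C} (pA : P ⟶ A) (pB : P ⟶ B) : Prop :=
  ∀ ⦃X : C⦄ (f : X ⟶ A) (g : X ⟶ B), ∃ h : X ⟶ P, h ≫ pA = f ∧ h ≫ pB = g

/-- A weak coproduct of `A` and `B`: every pair of morphisms out of `A` and `B` factors through the
injections, but the factorization need not be unique. -/
def IsWeakCoproduct {C : Type u} [Category.{v} C] {A B P : C} (iA : A ⟶ P) (iB : B ⟶ P) : Prop :=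
  ∀ ⦃X : C⦄ (f : A ⟶ X) (g : B ⟶ X), ∃ h : P ⟶ X, iA ≫ h = f ∧ iB ≫ h = g

section

variable {C : Type u} [Category.{v} C] {A B P : C}
  {pA : P ⟶ A} {pB : P ⟶ B} {iA : A ⟶ P} {iB : B ⟶ P}

theorem IsEFBiproduct.isWeakProduct (h : IsEFBiproduct P pA pB iA iB) : IsWeakProduct pA pB :=
  fun X f g ↦ (h.isProduct X f g).exists

theorem IsEFBiproduct.isWeakCoproduct (h : IsEFBiproduct P pA pB iA iB) : IsWeakCoproduct iA iB :=
  fun X f g ↦ (h.isCoproduct X f g).exists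

-- The right-hand side does not involve `f`, which forces `iA ≫ pB` to be constant.
theorem IsWeakProduct.comp_iA_pB_eq (hP : IsWeakProduct pA pB) (hB : iB ≫ pB = 𝟙 B)
    (comm : (pB ≫ iB) ≫ (pA ≫ iA) = (pA ≫ iA) ≫ (pB ≫ iB)) {X : C} (f : X ⟶ A) (g : X ⟶ B) :
    f ≫ iA ≫ pB = g ≫ iB ≫ pA ≫ iA ≫ pB := by
  obtain ⟨k, rfl, rfl⟩ := hP f g
  calc (k ≫ pA) ≫ iA ≫ pB = k ≫ ((pA ≫ iA) ≫ (pB ≫ iB)) ≫ pB := by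
        simp only [Category.assoc, hB, Category.comp_id]
    _ = k ≫ ((pB ≫ iB) ≫ (pA ≫ iA)) ≫ pB := by rw [comm]
    _ = (k ≫ pB) ≫ iB ≫ pA ≫ iA ≫ pB := by simp only [Category.assoc]

theorem IsWeakProduct.isConstantMor_iA_pB (hP : IsWeakProduct pA pB) (hB : iB ≫ pB = 𝟙 B)
    (comm : (pB ≫ iB) ≫ (pA ≫ iA) = (pA ≫ iA) ≫ (pB ≫ iB)) : IsConstantMor (iA ≫ pB) :=
  fun _ f g ↦ (hP.comp_iA_pB_eq hB comm f (f ≫ iA ≫ pB)).trans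
    (hP.comp_iA_pB_eq hB comm g (f ≫ iA ≫ pB)).symm

theorem IsWeakCoproduct.iA_pB_comp_eq (hP : IsWeakCoproduct iA iB) (hA : iA ≫ pA = 𝟙 A)
    (comm : (pB ≫ iB) ≫ (pA ≫ iA) = (pA ≫ iA) ≫ (pB ≫ iB)) {Y : C} (f : A ⟶ Y) (g : B ⟶ Y) :
    (iA ≫ pB) ≫ g = (iA ≫ pB ≫ iB ≫ pA) ≫ f := by
  obtain ⟨k, rfl, rfl⟩ := hP f g
  calc (iA ≫ pB) ≫ iB ≫ k = iA ≫ ((pA ≫ iA) ≫ (pB ≫ iB)) ≫ k := by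
        simp only [Category.assoc, reassoc_of% hA]
    _ = iA ≫ ((pB ≫ iB) ≫ (pA ≫ iA)) ≫ k := by rw [comm]
    _ = (iA ≫ pB ≫ iB ≫ pA) ≫ iA ≫ k := by simp only [Category.assoc]

theorem IsWeakCoproduct.isCoconstantMor_iA_pB (hP : IsWeakCoproduct iA iB) (hA : iA ≫ pA = 𝟙 A)
    (comm : (pB ≫ iB) ≫ (pA ≫ iA) = (pA ≫ iA) ≫ (pB ≫ iB)) : IsCoconstantMor (iA ≫ pB) :=
  fun _ u v ↦ (hP.iA_pB_comp_eq hA comm ((iA ≫ pB) ≫ u) u).trans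
    (hP.iA_pB_comp_eq hA comm ((iA ≫ pB) ≫ u) v).symm

theorem isIdempotentElem_comp_of_comp_eq_id {p : P ⟶ A} {i : A ⟶ P} (h : i ≫ p = 𝟙 A) :
    IsIdempotentElem (M := End P) (p ≫ i) := by
  simp only [IsIdempotentElem, End.mul_def, Category.assoc, reassoc_of% h]

theorem stmt15_general (hprod : IsWeakProduct pA pB) (hcoprod : IsWeakCoproduct iA iB)
    (hA : iA ≫ pA = 𝟙 A) (hB : iB ≫ pB = 𝟙 B)
    (comm : (pB ≫ iB) ≫ (pA ≫ iA) = (pA ≫ iA) ≫ (pB ≫ iB)) :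
    IsConstantMor (iA ≫ pB) ∧ IsCoconstantMor (iA ≫ pB) ∧
    ((pA ≫ iA) ≫ (pB ≫ iB)) ≫ ((pA ≫ iA) ≫ (pB ≫ iB)) = (pA ≫ iA) ≫ (pB ≫ iB) := by
  refine ⟨hprod.isConstantMor_iA_pB hB comm, hcoprod.isCoconstantMor_iA_pB hA comm, ?_⟩
  have hcomm : Commute (S := End P) (pB ≫ iB) (pA ≫ iA) := comm.symm
  exact IsIdempotentElem.mul_of_commute hcomm (isIdempotentElem_comp_of_comp_eq_id hB)
    (isIdempotentElem_comp_of_comp_eq_id hA)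

end

/-- For a biproduct (in the enrichment-free sense), `pB ∘ iA` is constant and
coconstant, and the composite `(iB ∘ pB) ∘ (iA ∘ pA)` (written diagrammatically as
`(pA ≫ iA) ≫ (pB ≫ iB)`) is idempotent. -/
theorem stmt15 {C : Type u} [Category.{v} C] {A B P : C}
    {pA : P ⟶ A} {pB : P ⟶ B} {iA : A ⟶ P} {iB : B ⟶ P}
    (h : IsEFBiproduct P pA pB iA iB) :
    (∀ (X : C) (f g : X ⟶ A), f ≫ (iA ≫ pB) = g ≫ (iA ≫ pB)) ∧
    (∀ (Y : C) (u v : B ⟶ Y), (iA ≫ pB) ≫ u = (iA ≫ pB) ≫ v) ∧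
    ((pA ≫ iA) ≫ (pB ≫ iB)) ≫ ((pA ≫ iA) ≫ (pB ≫ iB)) = (pA ≫ iA) ≫ (pB ≫ iB) :=
  stmt15_general h.isWeakProduct h.isWeakCoproduct h.pA_iA h.pB_iB h.idem_comm
end
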